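/- Let X be a metric space, P ⊆ X homeomorphic to [0,1]³ via h, with faces P⁻_ℓ = h({x₃=0}) and P⁻_r = h({x₃=1}). If ψ: P → X is continuous on a compact K ⊆ P and (K, ψ) stretches (P, P⁻) to itself along paths (i.e., every path γ in P joining P⁻_ℓ to P⁻_r has a sub-path σ with values in K such that ψ∘σ stays in P and joins the two faces), then ψ has a fixed point in K. -/

import Mathlib

/-!
Read `ψ` in coordinates on the cube and extend it by Tietze to a self-map `G`. Let `V` be the closed
set of points of the domain at which `G` fixes the stretched coordinate `i`. By stretching and the
intermediate value theorem, every path from the face `x i = 0` to the face `x i = 1` meets `V`.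
Hence `V` is the zero set of a continuous function `f` that is `≤ 0` on the first face and `≥ 0` on
the second: take a nonnegative function vanishing exactly on `V` and flip its sign on the path
components of the complement that meet the first face. Replacing the `i`-th coordinate of `x - G x`
by `f x` gives a map satisfying the hypotheses of the Poincaré–Miranda theorem, and its zeros are
points of `V` fixed by `G`.

Poincaré–Miranda comes from a parity count on a grid. If `a i` is a `ZMod 2`-valued function of the
grid points equal to `0` and `1` on the two faces in direction `i`, then the cup product of the
coboundaries `δa i` is exact, and Stokes' formula shows by induction on the dimension that its sum
over the grid is `1`. So it is nonzero on some cell, on which no `a i` is constant.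
-/

open Set Filter Topology unitInterval Function

universe u

section Combinatorics

variable {ι : Type*} [DecidableEq ι]

lemma sum_sum_erase_comm {M : Type*} [AddCommMonoid M] (S : Finset ι) (f : ι → ι → M) :
    ∑ j ∈ S, ∑ k ∈ S.erase j, f j k = ∑ j ∈ S, ∑ k ∈ S.erase j, f k j :=
  Finset.sum_comm' fun _ _ ↦ by grind

lemma sum_sum_erase_eq_zero_of_symm {R : Type*} [Ring R] [CharP R 2] (S : Finset ι)
    {f : ι → ι → R} (hf : ∀ j k, f j k = f k j) :
    ∑ j ∈ S, ∑ k ∈ S.erase j, f j k = 0 := by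
  rw [Finset.sum_sigma']
  refine Finset.sum_involution (fun p _ ↦ ⟨p.2, p.1⟩) (fun p _ ↦ ?_) ?_ ?_ ?_
  · rw [hf, CharTwo.add_self_eq_zero]
  all_goals grind

/-- The mod 2 cubical cup product `δa i₁ ⌣ ⋯ ⌣ δa iₖ`, for `l = [i₁, …, iₖ]`, evaluated on the unit
cube with lowest corner `x` spanned by the `k` directions in `S`. As usual for cubes, the first
factor takes the front edge in direction `j` and the others the opposite face; no signs occur
mod 2. -/
def cupCoboundary (a : ι → (ι → ℕ) → ZMod 2) : List ι → Finset ι → (ι → ℕ) → ZMod 2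
  | [], _, _ => 1
  | i :: l, S, x => ∑ j ∈ S, (a i (x + Pi.single j 1) - a i x) *
      cupCoboundary a l (S.erase j) (x + Pi.single j 1)

variable {a : ι → (ι → ℕ) → ZMod 2}

lemma sum_cupCoboundary_sub_eq_zero (l : List ι) (S : Finset ι) (x : ι → ℕ) :
    ∑ j ∈ S, (cupCoboundary a l (S.erase j) (x + Pi.single j 1) -
      cupCoboundary a l (S.erase j) x) = 0 := by
  induction l generalizing S x with
  | nil => simp [cupCoboundary]
  | cons i l ih =>
    let e (j : ι) : ι → ℕ := Pi.single j 1
    let ω (j k : ι) := cupCoboundary a l ((S.erase j).erase k)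
    have ω_comm (j k : ι) : ω j k = ω k j := by simp only [ω, Finset.erase_right_comm]
    have closed_at_base : ∑ j ∈ S, ∑ k ∈ S.erase j, a i x * (ω j k (x + e k) - ω j k x) = 0 :=
      Finset.sum_eq_zero fun j _ ↦ by rw [← Finset.mul_sum, ih, mul_zero]
    have closed_at_neighbours : ∑ j ∈ S, ∑ k ∈ S.erase j,
        a i (x + e j) * (ω j k (x + e j + e k) - ω j k (x + e j)) = 0 :=
      Finset.sum_eq_zero fun j _ ↦ by rw [← Finset.mul_sum, ih, mul_zero]
    have symm_part : ∑ j ∈ S, ∑ k ∈ S.erase j,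
        (a i (x + e j + e k) * ω j k (x + e j + e k) + a i x * ω j k x) = 0 :=
      sum_sum_erase_eq_zero_of_symm S fun j k ↦ by rw [ω_comm, add_right_comm]
    have swapped : ∑ j ∈ S, ∑ k ∈ S.erase j, a i (x + e k) * ω j k (x + e k) =
        ∑ j ∈ S, ∑ k ∈ S.erase j, a i (x + e j) * ω j k (x + e j) := by
      rw [sum_sum_erase_comm]
      simp only [ω_comm]
    calc ∑ j ∈ S, (cupCoboundary a (i :: l) (S.erase j) (x + e j) -
          cupCoboundary a (i :: l) (S.erase j) x)
        = ∑ j ∈ S, ∑ k ∈ S.erase j,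
            ((a i (x + e j + e k) - a i (x + e j)) * ω j k (x + e j + e k) -
              (a i (x + e k) - a i x) * ω j k (x + e k)) := by
          simp only [cupCoboundary, ← Finset.sum_sub_distrib, ω, e]
      _ = 0 := by
          have two_eq_zero : (2 : ZMod 2) = 0 := rfl
          simp only [mul_sub, sub_mul, Finset.sum_add_distrib, Finset.sum_sub_distrib]
            at closed_at_base closed_at_neighbours symm_part swapped ⊢
          linear_combination symm_part + closed_at_base - closed_at_neighbours - swapped
            - (∑ j ∈ S, ∑ k ∈ S.erase j, a i (x + e j) * ω j k (x + e j)) * two_eq_zero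

/-- `δa ⌣ ω = δ(a ω)`, because a cup product `ω` of coboundaries is a cocycle. -/
lemma cupCoboundary_cons (i : ι) (l : List ι) (S : Finset ι) (x : ι → ℕ) :
    cupCoboundary a (i :: l) S x =
      ∑ j ∈ S, (a i (x + Pi.single j 1) * cupCoboundary a l (S.erase j) (x + Pi.single j 1) -
        a i x * cupCoboundary a l (S.erase j) x) := by
  rw [cupCoboundary, ← sub_eq_zero, ← Finset.sum_sub_distrib, ← neg_eq_zero,
    ← mul_zero (a i x), ← sum_cupCoboundary_sub_eq_zero l S x, Finset.mul_sum,
    ← Finset.sum_neg_distrib]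
  exact Finset.sum_congr rfl fun j _ ↦ by ring

lemma cupCoboundary_eq_zero_of_const {l : List ι} {i : ι} (hi : i ∈ l) {S : Finset ι}
    {x : ι → ℕ} {c : ZMod 2}
    (hc : ∀ y ∈ Icc x (S.piecewise (x + 1) x), a i y = c) : cupCoboundary a l S x = 0 := by
  induction l generalizing S x with
  | nil => simp at hi
  | cons k l ih =>
    refine Finset.sum_eq_zero fun j hj ↦ ?_
    have le_top (T : Finset ι) (z : ι → ℕ) : z ≤ T.piecewise (z + 1) z :=
      T.le_piecewise_of_le_of_le le_self_add le_rfl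
    have face_subset : Icc (x + Pi.single j 1)
        ((S.erase j).piecewise (x + Pi.single j 1 + 1) (x + Pi.single j 1)) ⊆
          Icc x (S.piecewise (x + 1) x) := by
      refine Icc_subset_Icc le_self_add fun m ↦ ?_
      by_cases hmj : m = j <;> by_cases hmS : m ∈ S <;> simp_all [Finset.piecewise]
    rcases List.mem_cons.1 hi with rfl | hil
    · rw [hc _ (face_subset (left_mem_Icc.2 (le_top _ _))), hc x (left_mem_Icc.2 (le_top _ _)),
        sub_self, zero_mul]
    · rw [ih hil fun y hy ↦ hc y (face_subset hy), mul_zero]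

variable [Fintype ι] {N : ℕ}

/-- The lowest corners of the unit cubes, spanned by the directions in `S`, that tile the face of
`[0, N]^ι` on which all coordinates outside `S` equal `N`. -/
def gridFace (N : ℕ) (S : Finset ι) : Finset (ι → ℕ) :=
  Fintype.piFinset fun i ↦ if i ∈ S then Finset.range N else {N}

lemma mem_gridFace {S : Finset ι} {x : ι → ℕ} :
    x ∈ gridFace N S ↔ ∀ i, if i ∈ S then x i < N else x i = N := by
  refine Fintype.mem_piFinset.trans (forall_congr' fun i ↦ ?_)
  by_cases hi : i ∈ S <;> simp [hi]

lemma sum_gridFace_insert {M : Type*} [AddCommMonoid M] {j : ι} {S : Finset ι} (hj : j ∉ S)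
    (g : (ι → ℕ) → M) :
    ∑ x ∈ gridFace N (insert j S), g x =
      ∑ y ∈ gridFace N S, ∑ m ∈ Finset.range N, g (update y j m) := by
  rw [Finset.sum_sigma']
  symm
  refine Finset.sum_bij' (fun p _ ↦ update p.1 j p.2) (fun x _ ↦ ⟨update x j N, x j⟩)
    ?_ ?_ ?_ ?_ ?_ <;> simp only [Finset.mem_sigma, mem_gridFace, Finset.mem_range, update_apply]
  · grind
  · grind
  · rintro ⟨y, m⟩ ⟨hy, -⟩
    have hyj : y j = N := by simpa [hj] using hy j
    simp [← hyj]
  · grind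
  · grind

lemma sum_gridFace_insert_sub {M : Type*} [AddCommGroup M] {j : ι} {S : Finset ι}
    (hj : j ∉ S) (g : (ι → ℕ) → M) :
    ∑ x ∈ gridFace N (insert j S), (g (x + Pi.single j 1) - g x) =
      ∑ y ∈ gridFace N S, (g y - g (update y j 0)) := by
  rw [sum_gridFace_insert hj]
  refine Finset.sum_congr rfl fun y hy ↦ ?_
  have hyj : y j = N := by simpa [hj] using mem_gridFace.1 hy j
  have update_add_single (m : ℕ) : update y j m + Pi.single j 1 = update y j (m + 1) := by
    ext k
    by_cases hk : k = j <;> simp [hk]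
  simp only [update_add_single]
  rw [Finset.sum_range_sub fun m ↦ g (update y j m), ← hyj, update_eq_self]

lemma sum_cupCoboundary_gridFace (h0 : ∀ i x, x i = 0 → a i x = 0)
    (hN : ∀ i x, x i = N → a i x = 1) {l : List ι} (hl : l.Nodup) :
    ∑ x ∈ gridFace N l.toFinset, cupCoboundary a l l.toFinset x = 1 := by
  induction l with
  | nil => simp [cupCoboundary, gridFace]
  | cons i l ih =>
    obtain ⟨hil, hl⟩ := List.nodup_cons.1 hl
    set T := (i :: l).toFinset with hT
    have T_erase : T.erase i = l.toFinset := by simp [hT, hil]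
    let ω (j : ι) := cupCoboundary a l (T.erase j)
    have flux {j : ι} (hj : j ∈ T) (f : (ι → ℕ) → ZMod 2) :
        ∑ x ∈ gridFace N T, (f (x + Pi.single j 1) - f x) =
          ∑ y ∈ gridFace N (T.erase j), (f y - f (update y j 0)) := by
      rw [← sum_gridFace_insert_sub (T.notMem_erase j), Finset.insert_erase hj]
    have ω_eq_zero {j : ι} (hj : j ∈ l) {y : ι → ℕ} (hy : y j = 0 ∨ y j = N) : ω j y = 0 := by
      have coord_eq {z : ι → ℕ} (hz : z ∈ Icc y ((T.erase j).piecewise (y + 1) y)) : z j = y j :=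
        le_antisymm (by simpa using hz.2 j) (hz.1 j)
      rcases hy with hy | hy
      · exact cupCoboundary_eq_zero_of_const hj fun z hz ↦ h0 j z ((coord_eq hz).trans hy)
      · exact cupCoboundary_eq_zero_of_const hj fun z hz ↦ hN j z ((coord_eq hz).trans hy)
    calc ∑ x ∈ gridFace N T, cupCoboundary a (i :: l) T x
        = ∑ j ∈ T, ∑ y ∈ gridFace N (T.erase j),
            (a i y * ω j y - a i (update y j 0) * ω j (update y j 0)) := by
          simp only [cupCoboundary_cons]
          rw [Finset.sum_comm]
          exact Finset.sum_congr rfl fun j hj ↦ flux hj fun x ↦ a i x * ω j x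
      _ = ∑ y ∈ gridFace N (T.erase i),
            (a i y * ω i y - a i (update y i 0) * ω i (update y i 0)) := by
          refine Finset.sum_eq_single_of_mem i (by simp [hT]) fun j hj hji ↦
            Finset.sum_eq_zero fun y hy ↦ ?_
          have hjl : j ∈ l := by simpa [hT, hji] using hj
          have hyj : y j = N := by simpa using mem_gridFace.1 hy j
          rw [ω_eq_zero hjl (.inr hyj), ω_eq_zero hjl (.inl (update_self j 0 y))]
          ring
      _ = ∑ y ∈ gridFace N l.toFinset, cupCoboundary a l l.toFinset y := by
          simp only [ω, T_erase]
          refine Finset.sum_congr rfl fun y hy ↦ ?_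
          have hyi : y i = N := by simpa [hil] using mem_gridFace.1 hy i
          rw [hN i y hyi, h0 i _ (update_self i 0 y)]
          ring
      _ = 1 := ih hl

end Combinatorics

theorem exists_cell_forall_straddles {ι : Type*} [Finite ι] {N : ℕ} {A : ι → Set (ι → ℕ)}
    (h0 : ∀ i x, x i = 0 → x ∉ A i) (hN : ∀ i x, x i = N → x ∈ A i) :
    ∃ x : ι → ℕ, ∀ i, (∃ y ∈ Icc x (x + 1), y ∉ A i) ∧ ∃ z ∈ Icc x (x + 1), z ∈ A i := by
  classical
  cases nonempty_fintype ι
  by_contra! hcell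
  let a (i : ι) : (ι → ℕ) → ZMod 2 := (A i).indicator 1
  have sum_eq_one := sum_cupCoboundary_gridFace (a := a) (N := N)
    (fun i x hx ↦ indicator_of_notMem (h0 i x hx) 1) (fun i x hx ↦ indicator_of_mem (hN i x hx) 1)
    Finset.univ.nodup_toList
  rw [Finset.toList_toFinset] at sum_eq_one
  refine one_ne_zero (sum_eq_one.symm.trans (Finset.sum_eq_zero fun x _ ↦ ?_))
  obtain ⟨i, hi⟩ := hcell x
  obtain ⟨c, hc⟩ : ∃ c, ∀ y ∈ Icc x (x + 1), a i y = c := by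
    by_cases hy : ∃ y ∈ Icc x (x + 1), y ∉ A i
    · exact ⟨0, fun z hz ↦ indicator_of_notMem (hi hy z hz) 1⟩
    · exact ⟨1, fun z hz ↦ indicator_of_mem (by_contra fun hzA ↦ hy ⟨z, hz, hzA⟩) 1⟩
  refine cupCoboundary_eq_zero_of_const (by simp) (i := i) (c := c) ?_
  rwa [Finset.piecewise_univ]

lemma exists_dist_le_and_sign_change {ι : Type*} [Fintype ι] {f : (ι → I) → ι → ℝ}
    (h0 : ∀ x i, x i = 0 → f x i ≤ 0) (h1 : ∀ x i, x i = 1 → 0 ≤ f x i) (n : ℕ) :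
    ∃ p : ι → I, ∀ i, (∃ y, dist y p ≤ 1 / (n + 1 : ℝ) ∧ f y i ≤ 0) ∧
      ∃ z, dist z p ≤ 1 / (n + 1 : ℝ) ∧ 0 ≤ f z i := by
  let node (x : ι → ℕ) : ι → I := fun i ↦ projIcc 0 1 zero_le_one (x i / (n + 1 : ℝ))
  have node_zero {x : ι → ℕ} {i : ι} (hx : x i = 0) : node x i = 0 := by
    simp [node, hx, projIcc_left]
  have node_last {x : ι → ℕ} {i : ι} (hx : x i = n + 1) : node x i = 1 := by
    simp [node, hx, div_self (Nat.cast_add_one_ne_zero (R := ℝ) n), projIcc_right]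
  have dist_node {x y : ι → ℕ} (hy : y ∈ Icc x (x + 1)) :
      dist (node y) (node x) ≤ 1 / (n + 1 : ℝ) := by
    refine (dist_pi_le_iff (by positivity)).2 fun i ↦ ?_
    have x_le : (x i : ℝ) ≤ y i := mod_cast hy.1 i
    have y_le : (y i : ℝ) ≤ x i + 1 := mod_cast hy.2 i
    calc dist (node y i) (node x i) ≤ |(y i / (n + 1) - x i / (n + 1) : ℝ)| :=
          abs_projIcc_sub_projIcc zero_le_one
      _ = (y i - x i) / (n + 1 : ℝ) := by
          rw [← sub_div, abs_of_nonneg (div_nonneg (sub_nonneg.2 x_le) (by positivity))]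
      _ ≤ 1 / (n + 1) := by gcongr; linarith
  -- The condition `x i ≠ 0` breaks the tie where `f` vanishes on the face `x i = 0`.
  obtain ⟨x, hx⟩ := exists_cell_forall_straddles (N := n + 1)
    (A := fun i ↦ {x | x i ≠ 0 ∧ 0 ≤ f (node x) i}) (fun i x hx h ↦ h.1 hx)
    (fun i x hx ↦ ⟨by lia, h1 _ i (node_last hx)⟩)
  refine ⟨node x, fun i ↦ ?_⟩
  obtain ⟨⟨y, hy, hyA⟩, z, hz, hzA⟩ := hx i
  refine ⟨⟨node y, dist_node hy, ?_⟩, node z, dist_node hz, hzA.2⟩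
  by_cases hy0 : y i = 0
  · exact h0 _ i (node_zero hy0)
  · exact (not_le.1 fun h ↦ hyA ⟨hy0, h⟩).le

theorem poincare_miranda {ι : Type*} [Finite ι] {f : (ι → I) → ι → ℝ}
    (hf : Continuous f) (h0 : ∀ x i, x i = 0 → f x i ≤ 0) (h1 : ∀ x i, x i = 1 → 0 ≤ f x i) :
    ∃ x, f x = 0 := by
  cases nonempty_fintype ι
  choose p hneg hpos using exists_dist_le_and_sign_change h0 h1
  obtain ⟨q, φ, hφ, hpq⟩ := CompactSpace.tendsto_subseq p
  have tendsto_of_near {y : ℕ → ι → I} (hy : ∀ n, dist (y n) (p n) ≤ 1 / (n + 1 : ℝ)) :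
      Tendsto (f ∘ y ∘ φ) atTop (𝓝 (f q)) := by
    refine (hf.tendsto q).comp ((tendsto_iff_of_dist ?_).2 hpq)
    exact squeeze_zero (fun _ ↦ dist_nonneg) (fun n ↦ hy (φ n))
      (tendsto_one_div_add_atTop_nhds_zero_nat.comp hφ.tendsto_atTop)
  refine ⟨q, funext fun i ↦ le_antisymm ?_ ?_⟩
  · choose y hy hfy using fun n ↦ hneg n i
    exact le_of_tendsto' ((tendsto_of_near hy).apply_nhds i) fun n ↦ hfy (φ n)
  · choose z hz hfz using fun n ↦ hpos n i
    exact ge_of_tendsto' ((tendsto_of_near hz).apply_nhds i) fun n ↦ hfz (φ n)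

lemma exists_continuous_separating {Z : Type*} [TopologicalSpace Z] [LocallyPathConnectedSpace Z]
    [PerfectlyNormalSpace Z] {V A B : Set Z} (hV : IsClosed V)
    (hAB : ∀ a ∈ A, ∀ b ∈ B, ¬ JoinedIn Vᶜ a b) :
    ∃ f : Z → ℝ, Continuous f ∧ f ⁻¹' {0} = V ∧ (∀ a ∈ A, f a ≤ 0) ∧ ∀ b ∈ B, 0 ≤ f b := by
  classical
  obtain ⟨g, rfl, hg⟩ := perfectlyNormalSpace_iff_forall_isClosed_preimage_zero.1 inferInstance V hV
  set V := g ⁻¹' {0}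
  let U : Set Z := ⋃ a ∈ A, pathComponentIn Vᶜ a
  have mem_U {x : Z} : x ∈ U ↔ ∃ a ∈ A, JoinedIn Vᶜ a x := by simp [U, pathComponentIn]
  have isOpen_U : IsOpen U := isOpen_biUnion fun a _ ↦ hV.isOpen_compl.pathComponentIn a
  have frontier_U : frontier U ⊆ V := by
    intro x hx
    by_contra hxV
    rw [isOpen_U.frontier_eq] at hx
    obtain ⟨y, hxy, hyU⟩ := mem_closure_iff_nhds.1 hx.1 _
      (pathComponentIn_mem_nhds (hV.isOpen_compl.mem_nhds hxV))
    obtain ⟨a, ha, hay⟩ := mem_U.1 hyU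
    exact hx.2 (mem_U.2 ⟨a, ha, hay.trans (JoinedIn.symm hxy)⟩)
  have eq_neg_on_V {x : Z} (hx : x ∈ V) : -g x = g x := by simp [show g x = 0 from hx]
  refine ⟨U.piecewise (-g) g, ?_, ?_, fun a ha ↦ ?_, fun b hb ↦ ?_⟩
  · exact continuous_neg.comp g.continuous |>.piecewise (fun x hx ↦ eq_neg_on_V (frontier_U hx))
      g.continuous
  · ext x
    by_cases hx : x ∈ U <;> simp [hx, V]
  · by_cases haV : a ∈ V
    · by_cases haU : a ∈ U <;> simp [haU, show g a = 0 from haV]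
    · have haU : a ∈ U := mem_U.2 ⟨a, ha, JoinedIn.refl haV⟩
      simpa [haU] using (hg a).1
  · have hbU : b ∉ U := fun h ↦ by
      obtain ⟨a, ha, hab⟩ := mem_U.1 h
      exact hAB a ha b hb hab
    simpa [hbU] using (hg b).1

/-- `(K, ψ)` stretches `(P, L ∪ R)` to itself along paths: every path in `P` from `L` to `R`
has a subpath in `K` whose `ψ`-image stays in `P` and joins `L` and `R`, in either order. Paths are
functions on `ℝ` that are continuous on `[0, 1]`. -/
def StretchesAlongPaths {X : Type*} [TopologicalSpace X] (P L R K : Set X) (ψ : X → X) : Prop :=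
  ∀ γ : ℝ → X, ContinuousOn γ (Icc 0 1) → (∀ t ∈ Icc (0 : ℝ) 1, γ t ∈ P) → γ 0 ∈ L → γ 1 ∈ R →
    ∃ t' t'' : ℝ, t' ∈ Icc (0 : ℝ) 1 ∧ t'' ∈ Icc (0 : ℝ) 1 ∧ t' ≤ t'' ∧
      (∀ t ∈ Icc t' t'', γ t ∈ K ∧ ψ (γ t) ∈ P) ∧
      ((ψ (γ t') ∈ L ∧ ψ (γ t'') ∈ R) ∨ (ψ (γ t') ∈ R ∧ ψ (γ t'') ∈ L))

section Cube

variable {ι : Type*} {i : ι}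

lemma StretchesAlongPaths.exists_coord_eq {W : Set (ι → I)} {G : (ι → I) → ι → I}
    (hG : Continuous G)
    (stretch : StretchesAlongPaths univ {x | x i = 0} {x | x i = 1} W G)
    {a b : ι → I} (ha : a i = 0) (hb : b i = 1) (p : Path a b) :
    ∃ t, p t ∈ W ∧ G (p t) i = p t i := by
  obtain ⟨t', t'', ht', ht'', htt, hW, hends⟩ := stretch p.extend p.continuous_extend.continuousOn
    (fun _ _ ↦ mem_univ _) (by simpa using ha) (by simpa using hb)
  have hx : Continuous fun t ↦ p.extend t i := (continuous_apply i).comp p.continuous_extend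
  have hGx : Continuous fun t ↦ G (p.extend t) i :=
    (continuous_apply i).comp (hG.comp p.continuous_extend)
  have exists_eq : ∃ t ∈ Icc t' t'', G (p.extend t) i = p.extend t i := by
    have left_mem := left_mem_Icc.2 htt
    have right_mem := right_mem_Icc.2 htt
    rcases hends with ⟨h0, h1⟩ | ⟨h1, h0⟩
    · exact isPreconnected_Icc.intermediate_value₂ left_mem right_mem
        hGx.continuousOn hx.continuousOn (h0.out.trans_le unitInterval.nonneg')
        (unitInterval.le_one'.trans_eq h1.out.symm)
    · exact isPreconnected_Icc.intermediate_value₂ right_mem left_mem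
        hGx.continuousOn hx.continuousOn (h0.out.trans_le unitInterval.nonneg')
        (unitInterval.le_one'.trans_eq h1.out.symm)
  obtain ⟨t, ht, hGt⟩ := exists_eq
  have hpt : p.extend t = p ⟨t, ht'.1.trans ht.1, ht.2.trans ht''.2⟩ := p.extend_apply _
  exact ⟨_, hpt ▸ (hW t ht).1, hpt ▸ hGt⟩

theorem StretchesAlongPaths.exists_fixedPoint_cube [Finite ι] {W : Set (ι → I)} (hW : IsClosed W)
    {G : (ι → I) → ι → I} (hG : Continuous G)
    (stretch : StretchesAlongPaths univ {x | x i = 0} {x | x i = 1} W G) :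
    ∃ x ∈ W, G x = x := by
  classical
  let V : Set (ι → I) := W ∩ {x | G x i = x i}
  have isClosed_V : IsClosed V := hW.inter (isClosed_eq (by fun_prop) (by fun_prop))
  have V_cuts (a : ι → I) (ha : a i = 0) (b : ι → I) (hb : b i = 1) : ¬ JoinedIn Vᶜ a b := by
    rintro ⟨p, hp⟩
    obtain ⟨t, ht⟩ := stretch.exists_coord_eq hG ha hb p
    exact hp t ht
  have : LocallyPathConnectedSpace I := (convex_Icc 0 1).locallyPathConnectedSpace
  obtain ⟨f, hf, hfV, hf0, hf1⟩ := exists_continuous_separating isClosed_V V_cuts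
  let F (x : ι → I) : ι → ℝ := update (fun j ↦ (x j - G x j : ℝ)) i (f x)
  have hF : Continuous F := by fun_prop
  have F_nonpos (x : ι → I) (j : ι) (hx : x j = 0) : F x j ≤ 0 := by
    rcases eq_or_ne j i with rfl | hj
    · simpa [F] using hf0 x hx
    · simp [F, hj, hx, unitInterval.nonneg]
  have F_nonneg (x : ι → I) (j : ι) (hx : x j = 1) : 0 ≤ F x j := by
    rcases eq_or_ne j i with rfl | hj
    · simpa [F] using hf1 x hx
    · simp [F, hj, hx, unitInterval.le_one]
  obtain ⟨x, hx⟩ := poincare_miranda hF F_nonpos F_nonneg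
  have hxV : x ∈ V := hfV ▸ by simpa [F] using congrFun hx i
  refine ⟨x, hxV.1, funext fun j ↦ ?_⟩
  rcases eq_or_ne j i with rfl | hj
  · exact hxV.2
  · have hxj : (x j - G x j : ℝ) = 0 := by simpa [F, hj] using congrFun hx j
    exact Subtype.ext (sub_eq_zero.1 hxj).symm

end Cube

section Transport

variable {X : Type*} {Y : Type u} [TopologicalSpace X] [TopologicalSpace Y] {e : Y → X} {K : Set X}
  {ψ : X → X}

lemma isClosed_preimage_inter_preimage_range (he : IsClosedEmbedding e) (hK : IsClosed K)
    (hψ : ContinuousOn ψ K) : IsClosed (e ⁻¹' (K ∩ ψ ⁻¹' range e)) :=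
  (hψ.preimage_isClosed_of_isClosed hK he.isClosed_range).preimage he.continuous

lemma exists_continuous_lift [NormalSpace Y] [TietzeExtension.{u, u} Y] (he : IsClosedEmbedding e)
    (hK : IsClosed K) (hψ : ContinuousOn ψ K) :
    ∃ G : C(Y, Y), ∀ y ∈ e ⁻¹' (K ∩ ψ ⁻¹' range e), e (G y) = ψ (e y) := by
  set W := e ⁻¹' (K ∩ ψ ⁻¹' range e)
  have hW : IsClosed W := isClosed_preimage_inter_preimage_range he hK hψ
  have continuous_ψe : Continuous fun y : W ↦ ψ (e y) :=
    hψ.comp_continuous (he.continuous.comp continuous_subtype_val) fun y ↦ y.2.1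
  let e' : Y ≃ₜ range e := he.isEmbedding.toHomeomorph
  let g : C(W, Y) := ⟨fun y ↦ e'.symm ⟨ψ (e y), y.2.2⟩,
    e'.symm.continuous.comp (continuous_ψe.subtype_mk _)⟩
  obtain ⟨G, hG⟩ := ContinuousMap.exists_restrict_eq hW g
  refine ⟨G, fun y hy ↦ ?_⟩
  have hGy : G y = e'.symm ⟨ψ (e y), hy.2⟩ := DFunLike.congr_fun hG ⟨y, hy⟩
  rw [hGy]
  exact congrArg Subtype.val (e'.apply_symm_apply ⟨ψ (e y), hy.2⟩)

lemma StretchesAlongPaths.pullback (he : Continuous e) (he' : Injective e) {L R : Set Y}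
    (stretch : StretchesAlongPaths (range e) (e '' L) (e '' R) K ψ)
    {G : Y → Y} (hG : ∀ y ∈ e ⁻¹' (K ∩ ψ ⁻¹' range e), e (G y) = ψ (e y)) :
    StretchesAlongPaths univ L R (e ⁻¹' (K ∩ ψ ⁻¹' range e)) G := by
  intro γ hγ _ h0 h1
  obtain ⟨t', t'', ht', ht'', htt, hK, hends⟩ := stretch (e ∘ γ) (he.comp_continuousOn hγ)
    (fun t _ ↦ mem_range_self (γ t)) (mem_image_of_mem e h0) (mem_image_of_mem e h1)
  refine ⟨t', t'', ht', ht'', htt, fun t ht ↦ ⟨hK t ht, mem_univ _⟩, ?_⟩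
  simpa only [comp_apply, ← hG _ (hK t' (left_mem_Icc.2 htt)),
    ← hG _ (hK t'' (right_mem_Icc.2 htt)), he'.mem_set_image] using hends

end Transport

instance tietzeExtension_unitInterval : TietzeExtension.{u} I :=
  .of_retract ⟨Subtype.val, continuous_subtype_val⟩
    ⟨projIcc 0 1 zero_le_one, continuous_projIcc⟩ (by ext; simp)

theorem stmt_19_general {X ι : Type*} [TopologicalSpace X] [Finite ι] (i : ι) {e : (ι → I) → X}
    (he : IsClosedEmbedding e) {K : Set X} (hK : IsClosed K) {ψ : X → X} (hψ : ContinuousOn ψ K)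
    (stretch : StretchesAlongPaths (range e) (e '' {x | x i = 0}) (e '' {x | x i = 1}) K ψ) :
    ∃ z ∈ K, ψ z = z := by
  obtain ⟨G, hG⟩ := exists_continuous_lift he hK hψ
  obtain ⟨x, hx, hGx⟩ := (stretch.pullback he.continuous he.injective hG).exists_fixedPoint_cube
    (isClosed_preimage_inter_preimage_range he hK hψ) G.continuous
  exact ⟨e x, hx.1, by rw [← hG x hx, hGx]⟩

/-- The cube `Fin 3 → I` identified with the box `[0, 1]³` inside `ℝ × ℝ × ℝ`. -/
def cubeHomeomorph :
    (Fin 3 → I) ≃ₜ (Icc (0 : ℝ) 1 ×ˢ Icc (0 : ℝ) 1 ×ˢ Icc (0 : ℝ) 1 : Set (ℝ × ℝ × ℝ)) where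
  toFun x := ⟨(x 0, x 1, x 2), (x 0).2, (x 1).2, (x 2).2⟩
  invFun q := ![⟨q.1.1, q.2.1⟩, ⟨q.1.2.1, q.2.2.1⟩, ⟨q.1.2.2, q.2.2.2⟩]
  left_inv x := by ext j; fin_cases j <;> rfl
  right_inv _ := rfl
  continuous_toFun := by fun_prop
  continuous_invFun := by fun_prop

lemma image_cubeHomeomorph_last (c : I) :
    cubeHomeomorph '' {x | x 2 = c} = {q | q.1.2.2 = (c : ℝ)} := by
  rw [cubeHomeomorph.image_eq_preimage_symm]
  ext q
  exact Subtype.ext_iff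

/-- Fixed point theorem for the "Stretching Along the Paths" property in dimension 3
(Theorem 2.2 of the paper). -/
theorem stmt_19 {X : Type*} [MetricSpace X] (P : Set X)
    (h : ((Set.Icc (0:ℝ) 1 ×ˢ Set.Icc (0:ℝ) 1 ×ˢ Set.Icc (0:ℝ) 1 :
        Set (ℝ × ℝ × ℝ))) ≃ₜ P)
    (Pl Pr : Set X)
    (hPl : Pl = {x : X | ∃ q : (Set.Icc (0:ℝ) 1 ×ˢ Set.Icc (0:ℝ) 1 ×ˢ
        Set.Icc (0:ℝ) 1 : Set (ℝ × ℝ × ℝ)), (q : ℝ × ℝ × ℝ).2.2 = 0 ∧ (h q : X) = x})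
    (hPr : Pr = {x : X | ∃ q : (Set.Icc (0:ℝ) 1 ×ˢ Set.Icc (0:ℝ) 1 ×ˢ
        Set.Icc (0:ℝ) 1 : Set (ℝ × ℝ × ℝ)), (q : ℝ × ℝ × ℝ).2.2 = 1 ∧ (h q : X) = x})
    (ψ : X → X) (K : Set X) (hKc : IsCompact K) (hKP : K ⊆ P)
    (hψ : ContinuousOn ψ K)
    (stretch : ∀ γ : ℝ → X, ContinuousOn γ (Set.Icc 0 1) →
      (∀ t ∈ Set.Icc (0:ℝ) 1, γ t ∈ P) → γ 0 ∈ Pl → γ 1 ∈ Pr →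
      ∃ t' t'' : ℝ, t' ∈ Set.Icc (0:ℝ) 1 ∧ t'' ∈ Set.Icc (0:ℝ) 1 ∧ t' ≤ t'' ∧
        (∀ t ∈ Set.Icc t' t'', γ t ∈ K ∧ ψ (γ t) ∈ P) ∧
        ((ψ (γ t') ∈ Pl ∧ ψ (γ t'') ∈ Pr) ∨ (ψ (γ t') ∈ Pr ∧ ψ (γ t'') ∈ Pl))) :
    ∃ z ∈ K, ψ z = z := by
  let e : (Fin 3 → I) → X := (fun q ↦ (h q : X)) ∘ cubeHomeomorph
  have he : IsClosedEmbedding e := Continuous.isClosedEmbedding (by fun_prop)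
    (Subtype.val_injective.comp (h.injective.comp cubeHomeomorph.injective))
  have range_e : range e = P := by
    rw [← Subtype.range_coe (s := P)]
    exact (cubeHomeomorph.trans h).surjective.range_comp Subtype.val
  refine stmt_19_general 2 he hKc.isClosed hψ ?_
  rw [range_e, image_comp, image_comp, image_cubeHomeomorph_last, image_cubeHomeomorph_last]
  subst hPl hPr
  exact stretch
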